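/- Let d ≥ 1 and let 𝗐 be a nonnegative measurable function on the simplex Δ^d. Then the weight W(x) = 𝗐(x₁²,…,x_d²) is a doubling weight on the unit ball B^d (with respect to the metric d_B) if and only if the weight 𝖶_Δ(x) = 𝗐(x₁,…,x_d)/√(x₁⋯x_d) is a doubling weight on the simplex Δ^d (with respect to the metric d_Δ). -/

import Mathlib

/-!
The squaring map `F(y) = (y₁², …, y_d²)` is an isometry from the nonnegative part of `(B^d, d_B)`
onto `(Δ^d, d_Δ)`, and its Jacobian `2^d ∏ yᵢ` cancels the factor `1/√(∏ xᵢ)`.  Hence the integral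
of `𝖶_Δ` over the ball of radius `r` around `x²` is `2^d` times the integral of `W` over the part
of the ball around `|x|` lying in the positive orthant (`lintegral_ballT`).  Since `W` is even in
every variable and replacing `y` by `|y|` decreases the distance to a point with nonnegative
coordinates, this part carries at least the fraction `2^{-d}` of the integral of `W` over the ball
(`lintegral_ballB_le`).  So the two families of integrals are comparable up to the factor `2^d`,
uniformly in centre and radius, and the doubling conditions are equivalent.

The weights need not be integrable, and the Bochner integral of a non-integrable function is `0`.
The comparison is therefore made between lower Lebesgue integrals in `[0, ∞]`.  Integrability on
corresponding balls is equivalent, and a doubling inequality whose larger ball has infinite mass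
holds trivially (`doubling_transfer`).
-/

open MeasureTheory Real MvPolynomial Finset
open scoped ENNReal

noncomputable section

/-- The Euclidean norm of `x ∈ ℝ^d`. -/
def eunorm {d : ℕ} (x : Fin d → ℝ) : ℝ := Real.sqrt (∑ i, (x i) ^ 2)

/-- The closed unit ball `B^d = {x : ‖x‖ ≤ 1}` in `ℝ^d` (Euclidean norm). -/
def Bd (d : ℕ) : Set (Fin d → ℝ) := {x | eunorm x ≤ 1}

/-- The metric `d_B(x,y) = arccos(⟨x,y⟩ + √(1-‖x‖²)√(1-‖y‖²))` on the unit ball. -/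
def distB {d : ℕ} (x y : Fin d → ℝ) : ℝ :=
  Real.arccos ((∑ i, x i * y i) +
    Real.sqrt (1 - eunorm x ^ 2) * Real.sqrt (1 - eunorm y ^ 2))

/-- The metric ball `{y ∈ B^d : d_B(x,y) < r}`. -/
def ballB {d : ℕ} (x : Fin d → ℝ) (r : ℝ) : Set (Fin d → ℝ) :=
  {y | y ∈ Bd d ∧ distB x y < r}

/-- `W` is a doubling weight on the unit ball `B^d` with respect to the metric `d_B`. -/
def IsDoublingBall (d : ℕ) (W : (Fin d → ℝ) → ℝ) : Prop :=
  ∃ L > (0 : ℝ), ∀ x ∈ Bd d, ∀ r : ℝ, 0 < r →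
    ∫ y in ballB x (2 * r), W y ≤ L * ∫ y in ballB x r, W y

/-- The standard simplex `Δ^d = {x : x_i ≥ 0, x_1 + ⋯ + x_d ≤ 1}`. -/
def Td (d : ℕ) : Set (Fin d → ℝ) := {x | (∀ i, 0 ≤ x i) ∧ ∑ i, x i ≤ 1}

/-- The metric `d_Δ(x,y) = arccos(Σ √(x_i y_i) + √((1-|x|)(1-|y|)))` on the simplex. -/
def distT {d : ℕ} (x y : Fin d → ℝ) : ℝ :=
  Real.arccos ((∑ i, Real.sqrt (x i * y i)) +
    Real.sqrt ((1 - ∑ i, x i) * (1 - ∑ i, y i)))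

/-- The metric ball `{y ∈ Δ^d : d_Δ(x,y) < r}`. -/
def ballT {d : ℕ} (x : Fin d → ℝ) (r : ℝ) : Set (Fin d → ℝ) :=
  {y | y ∈ Td d ∧ distT x y < r}

/-- `W` is a doubling weight on the simplex `Δ^d` with respect to the metric `d_Δ`. -/
def IsDoublingSimplex (d : ℕ) (W : (Fin d → ℝ) → ℝ) : Prop :=
  ∃ L > (0 : ℝ), ∀ x ∈ Td d, ∀ r : ℝ, 0 < r →
    ∫ y in ballT x (2 * r), W y ≤ L * ∫ y in ballT x r, W y

/-- Weighted `L^p` norm on the unit ball: for `p < ∞` it is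
`(∫_{B^d} |f|^p W)^{1/p}`, and for `p = ∞` the sup norm on `B^d`. -/
def lpNormB (d : ℕ) (W : (Fin d → ℝ) → ℝ) (p : ℝ≥0∞) (f : (Fin d → ℝ) → ℝ) : ℝ :=
  if p = ⊤ then ⨆ x : Bd d, |f x.1|
  else (∫ x in Bd d, |f x| ^ p.toReal * W x) ^ (1 / p.toReal)

/-- Weighted `L^p` norm on the simplex: for `p < ∞` it is
`(∫_{Δ^d} |f|^p W)^{1/p}`, and for `p = ∞` the sup norm on `Δ^d`. -/
def lpNormT (d : ℕ) (W : (Fin d → ℝ) → ℝ) (p : ℝ≥0∞) (f : (Fin d → ℝ) → ℝ) : ℝ :=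
  if p = ⊤ then ⨆ x : Td d, |f x.1|
  else (∫ x in Td d, |f x| ^ p.toReal * W x) ^ (1 / p.toReal)

/-- Evaluation of a real polynomial in `d` variables at a point of `ℝ^d`. -/
def evalP {d : ℕ} (f : MvPolynomial (Fin d) ℝ) (x : Fin d → ℝ) : ℝ :=
  MvPolynomial.eval x f

/-- The angular derivative `D_{i,j} = x_i ∂_j − x_j ∂_i` acting on polynomials. -/
def Dpoly {d : ℕ} (i j : Fin d) (f : MvPolynomial (Fin d) ℝ) : MvPolynomial (Fin d) ℝ :=
  X i * pderiv j f - X j * pderiv i f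

/-- The classical weight `W_μ(x) = (1−‖x‖²)^μ` on the unit ball. -/
def Wmu (d : ℕ) (μ : ℝ) (x : Fin d → ℝ) : ℝ := (1 - eunorm x ^ 2) ^ μ

/-- The squared weighted `L²(W_μ, B^d)` norm `‖f‖²_{μ,2} = ∫_{B^d} f² W_μ`. -/
def sqNormMu (d : ℕ) (μ : ℝ) (f : (Fin d → ℝ) → ℝ) : ℝ :=
  ∫ x in Bd d, (f x) ^ 2 * Wmu d μ x

/-- The weighted `L²(W_μ, B^d)` norm `‖f‖_{μ,2}`. -/
def normMu (d : ℕ) (μ : ℝ) (f : (Fin d → ℝ) → ℝ) : ℝ :=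
  Real.sqrt (sqNormMu d μ f)

/-- `f ∈ 𝒱_n(W_μ, B^d)`: a polynomial of total degree at most `n`, orthogonal in
`L²(W_μ, B^d)` to every polynomial of total degree less than `n`. -/
def memV (d : ℕ) (μ : ℝ) (n : ℕ) (f : MvPolynomial (Fin d) ℝ) : Prop :=
  f.totalDegree ≤ n ∧ ∀ g : MvPolynomial (Fin d) ℝ, g.totalDegree < n →
    ∫ x in Bd d, evalP f x * evalP g x * Wmu d μ x = 0

/-- The spectral operator `𝒟_μ` acting on polynomials. -/
def DmuP (d : ℕ) (μ : ℝ) (f : MvPolynomial (Fin d) ℝ) : MvPolynomial (Fin d) ℝ :=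
  (∑ i, (1 - X i ^ 2) * pderiv i (pderiv i f))
    - 2 * (∑ i, ∑ j ∈ Finset.Ioi i, X i * X j * pderiv i (pderiv j f))
    - C ((d : ℝ) + 2 * μ + 1) * ∑ i, X i * pderiv i f

/-- The partial derivative `∂_i` of a function on `ℝ^d`. -/
def pd {d : ℕ} (i : Fin d) (f : (Fin d → ℝ) → ℝ) (x : Fin d → ℝ) : ℝ :=
  fderiv ℝ f x (Pi.single i 1)

/-- `⟨x,∇⟩f(x) = Σ_i x_i ∂_i f(x)`. -/
def xgrad {d : ℕ} (f : (Fin d → ℝ) → ℝ) (x : Fin d → ℝ) : ℝ :=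
  ∑ i, x i * pd i f x

/-- The angular derivative `D_{i,j} = x_i ∂_j − x_j ∂_i` acting on functions. -/
def DijF {d : ℕ} (i j : Fin d) (f : (Fin d → ℝ) → ℝ) (x : Fin d → ℝ) : ℝ :=
  x i * pd j f x - x j * pd i f x

/-- The spectral operator `𝒟_μ` acting on functions. -/
def DmuF (d : ℕ) (μ : ℝ) (f : (Fin d → ℝ) → ℝ) (x : Fin d → ℝ) : ℝ :=
  (∑ i, (1 - x i ^ 2) * pd i (pd i f) x)
    - 2 * (∑ i, ∑ j ∈ Finset.Ioi i, x i * x j * pd i (pd j f) x)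
    - ((d : ℝ) + 2 * μ + 1) * ∑ i, x i * pd i f x

/-- The squaring map `(y₁, …, y_d) ↦ (y₁², …, y_d²)` from the ball to the simplex. -/
def sqMap {d : ℕ} (y : Fin d → ℝ) : Fin d → ℝ := fun i => y i ^ 2

/-- Multiplication of each coordinate by a sign. -/
def signMap {d : ℕ} (σ : Fin d → ℤˣ) (y : Fin d → ℝ) : Fin d → ℝ :=
  fun i => ((σ i : ℤ) : ℝ) * y i

/-- The open positive orthant. -/
def posOrthant (d : ℕ) : Set (Fin d → ℝ) := {y | ∀ i, 0 < y i}

/-! ### Geometry of the squaring and sign maps -/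

lemma eunorm_sq {d : ℕ} (x : Fin d → ℝ) : eunorm x ^ 2 = ∑ i, x i ^ 2 :=
  Real.sq_sqrt (Finset.sum_nonneg fun i _ => sq_nonneg (x i))

lemma mem_Bd {d : ℕ} {x : Fin d → ℝ} : x ∈ Bd d ↔ ∑ i, x i ^ 2 ≤ 1 := by
  simp [Bd, eunorm]

lemma sqMap_mem_Td {d : ℕ} {x : Fin d → ℝ} : sqMap x ∈ Td d ↔ x ∈ Bd d := by
  rw [mem_Bd]
  simp [Td, sqMap, sq_nonneg]

lemma distT_sqMap {d : ℕ} {x y : Fin d → ℝ} (hx : x ∈ Bd d)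
    (hx0 : ∀ i, 0 ≤ x i) (hy0 : ∀ i, 0 ≤ y i) :
    distT (sqMap x) (sqMap y) = distB x y := by
  rw [mem_Bd] at hx
  unfold distT distB sqMap
  rw [eunorm_sq, eunorm_sq, Real.sqrt_mul (by linarith)]
  congr 2
  refine Finset.sum_congr rfl fun i _ => ?_
  rw [← mul_pow, Real.sqrt_sq (mul_nonneg (hx0 i) (hy0 i))]

lemma sign_sq (u : ℤˣ) : (((u : ℤ) : ℝ)) ^ 2 = 1 := by
  rcases Int.units_eq_one_or u with h | h <;> simp [h]

lemma sqMap_signMap {d : ℕ} (σ : Fin d → ℤˣ) (y : Fin d → ℝ) :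
    sqMap (signMap σ y) = sqMap y := by
  funext i
  simp only [sqMap, signMap, mul_pow, sign_sq, one_mul]

lemma signMap_mem_ballB {d : ℕ} (σ : Fin d → ℤˣ) (x y : Fin d → ℝ) (r : ℝ) :
    signMap σ y ∈ ballB (signMap σ x) r ↔ y ∈ ballB x r := by
  have h1 : signMap σ y ∈ Bd d ↔ y ∈ Bd d := by
    rw [← sqMap_mem_Td, sqMap_signMap, sqMap_mem_Td]
  have hn : ∀ z : Fin d → ℝ, eunorm (signMap σ z) ^ 2 = eunorm z ^ 2 := fun z => by
    rw [eunorm_sq, eunorm_sq]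
    exact Finset.sum_congr rfl fun i _ => congrFun (sqMap_signMap σ z) i
  have h2 : distB (signMap σ x) (signMap σ y) = distB x y := by
    unfold distB
    rw [hn, hn]
    congr 2
    refine Finset.sum_congr rfl fun i _ => ?_
    have := sign_sq (σ i)
    simp only [signMap]
    linear_combination (x i * y i) * this
  simp only [ballB, Set.mem_ofPred_eq, h1, h2]

lemma exists_signMap_eq_abs {d : ℕ} (y : Fin d → ℝ) :
    ∃ σ : Fin d → ℤˣ, signMap σ y = fun i => |y i| := by
  refine ⟨fun i => if 0 ≤ y i then 1 else -1, ?_⟩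
  funext i
  by_cases h : 0 ≤ y i
  · simp [signMap, h, abs_of_nonneg h]
  · simp [signMap, h, abs_of_neg (not_le.mp h)]

/-- Folding a point into the nonnegative orthant brings it closer to any centre there. -/
lemma abs_mem_ballB {d : ℕ} {x y : Fin d → ℝ} {r : ℝ} (hx0 : ∀ i, 0 ≤ x i)
    (hy : y ∈ ballB x r) : (fun i => |y i|) ∈ ballB x r := by
  obtain ⟨hy1, hy2⟩ := hy
  rw [mem_Bd] at hy1
  refine ⟨by rw [mem_Bd]; simpa [sq_abs] using hy1, lt_of_le_of_lt ?_ hy2⟩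
  unfold distB
  apply Real.arccos_le_arccos
  have hn : eunorm (fun i => |y i|) = eunorm y := by simp [eunorm, sq_abs]
  rw [hn]
  gcongr with i
  · exact hx0 i
  · exact le_abs_self _

lemma image_sqMap {d : ℕ} {x : Fin d → ℝ} (hx : x ∈ Bd d) (hx0 : ∀ i, 0 ≤ x i) (r : ℝ) :
    sqMap '' (ballB x r ∩ posOrthant d) = ballT (sqMap x) r ∩ posOrthant d := by
  ext z
  constructor
  · rintro ⟨y, ⟨⟨hy1, hy2⟩, hy0⟩, rfl⟩
    refine ⟨⟨sqMap_mem_Td.2 hy1, ?_⟩, fun i => pow_pos (hy0 i) 2⟩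
    rwa [distT_sqMap hx hx0 fun i => (hy0 i).le]
  · rintro ⟨⟨hz1, hz2⟩, hz0⟩
    have hz : sqMap (fun i => Real.sqrt (z i)) = z :=
      funext fun i => Real.sq_sqrt (hz0 i).le
    have h0 : ∀ i, 0 < Real.sqrt (z i) := fun i => Real.sqrt_pos.2 (hz0 i)
    refine ⟨fun i => Real.sqrt (z i), ⟨⟨?_, ?_⟩, h0⟩, hz⟩
    · rwa [← sqMap_mem_Td, hz]
    · rwa [← distT_sqMap hx hx0 fun i => (h0 i).le, hz]

lemma sqMap_injOn (d : ℕ) : Set.InjOn sqMap (posOrthant d) := by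
  intro y hy z hz h
  funext i
  exact (pow_left_inj₀ (hy i).le (hz i).le two_ne_zero).1 (congrFun h i)

/-! ### Measurability and measure preservation -/

lemma measurableSet_ballB {d : ℕ} (x : Fin d → ℝ) (r : ℝ) : MeasurableSet (ballB x r) := by
  have h1 : Measurable (fun y : Fin d → ℝ => eunorm y) := by unfold eunorm; fun_prop
  have h2 : Measurable (fun y : Fin d → ℝ => distB x y) := by
    unfold distB
    exact Real.continuous_arccos.measurable.comp (by fun_prop)
  exact (measurableSet_le h1 measurable_const).inter (measurableSet_lt h2 measurable_const)

lemma measurableSet_ballT {d : ℕ} (x : Fin d → ℝ) (r : ℝ) : MeasurableSet (ballT x r) := by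
  have h2 : Measurable (fun y : Fin d → ℝ => distT x y) := by
    unfold distT
    exact Real.continuous_arccos.measurable.comp (by fun_prop)
  have h3 : MeasurableSet (Td d) := by
    have : Td d = (⋂ i, {x : Fin d → ℝ | 0 ≤ x i}) ∩ {x | ∑ i, x i ≤ 1} := by
      ext; simp [Td]
    rw [this]
    refine (MeasurableSet.iInter fun i => ?_).inter ?_
    · exact measurableSet_le measurable_const (by fun_prop)
    · exact measurableSet_le (by fun_prop) measurable_const
  exact h3.inter (measurableSet_lt h2 measurable_const)

lemma measurableSet_posOrthant (d : ℕ) : MeasurableSet (posOrthant d) := by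
  have : posOrthant d = ⋂ i, {x : Fin d → ℝ | 0 < x i} := by
    ext; simp [posOrthant]
  rw [this]
  exact MeasurableSet.iInter fun i => measurableSet_lt measurable_const (by fun_prop)

lemma measurePreserving_signMap {d : ℕ} (σ : Fin d → ℤˣ) :
    MeasurePreserving (signMap σ) := by
  refine volume_preserving_pi (f := fun i t => ((σ i : ℤ) : ℝ) * t) fun i => ?_
  rcases Int.units_eq_one_or (σ i) with h | h
  · simp only [h, Units.val_one, Int.cast_one, one_mul]
    exact MeasurePreserving.id (volume : Measure ℝ)
  · simpa [h] using Measure.measurePreserving_neg (volume : Measure ℝ)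

lemma ae_coord_ne_zero (d : ℕ) : ∀ᵐ y : Fin d → ℝ, ∀ i, y i ≠ 0 := by
  rw [ae_all_iff]
  intro i
  exact Measure.ae_eval_ne (fun _ : Fin d => (volume : Measure ℝ)) i 0

/-- A set of points with nonnegative coordinates agrees almost everywhere with its
part in the open positive orthant. -/
lemma inter_posOrthant_ae_eq {d : ℕ} {s : Set (Fin d → ℝ)} (hs : ∀ y ∈ s, ∀ i, 0 ≤ y i) :
    (s ∩ posOrthant d : Set (Fin d → ℝ)) =ᵐ[volume] s := by
  filter_upwards [ae_coord_ne_zero d] with y hy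
  apply propext
  exact ⟨fun h => h.1, fun h => ⟨h, fun i => lt_of_le_of_ne (hs y h i) (hy i).symm⟩⟩

/-! ### Comparison of the integrals -/

/-- The derivative of the squaring map at `y`, the diagonal map with entries `2 yᵢ`. -/
def sqDeriv {d : ℕ} (y : Fin d → ℝ) : (Fin d → ℝ) →L[ℝ] (Fin d → ℝ) :=
  ContinuousLinearMap.pi fun i => (2 * y i) • ContinuousLinearMap.proj i

lemma hasFDerivAt_sqMap {d : ℕ} (y : Fin d → ℝ) : HasFDerivAt sqMap (sqDeriv y) y := by
  unfold sqMap sqDeriv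
  rw [hasFDerivAt_pi]
  intro i
  have h := (ContinuousLinearMap.proj (R := ℝ) (φ := fun _ : Fin d => ℝ) i).hasFDerivAt (x := y)
  simpa using h.pow 2

lemma det_sqDeriv {d : ℕ} (y : Fin d → ℝ) : (sqDeriv y).det = ∏ i, (2 * y i) := by
  have : (sqDeriv y : (Fin d → ℝ) →ₗ[ℝ] (Fin d → ℝ)) =
      Matrix.toLin' (Matrix.diagonal fun i => 2 * y i) := by
    refine LinearMap.ext fun v => funext fun i => ?_
    simp [sqDeriv, Matrix.mulVec_diagonal]
  rw [ContinuousLinearMap.det, this, LinearMap.det_toLin', Matrix.det_diagonal]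

/-- Change of variables `z = y²`: the simplex weight on a ball of the simplex is `2^d` times the
ball weight on the positive part of the corresponding ball. -/
lemma lintegral_ballT {d : ℕ} (w : (Fin d → ℝ) → ℝ) {x : Fin d → ℝ} (hx : x ∈ Bd d)
    (hx0 : ∀ i, 0 ≤ x i) (r : ℝ) :
    ∫⁻ z in ballT (sqMap x) r, ENNReal.ofReal (w z / Real.sqrt (∏ i, z i)) =
      2 ^ d * ∫⁻ y in ballB x r ∩ posOrthant d, ENNReal.ofReal (w (sqMap y)) := by
  have hm := (measurableSet_ballB x r).inter (measurableSet_posOrthant d)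
  rw [← setLIntegral_congr (inter_posOrthant_ae_eq (s := ballT (sqMap x) r) fun y hy => hy.1.1),
    ← image_sqMap hx hx0,
    lintegral_image_eq_lintegral_abs_det_fderiv_mul volume hm
      (fun y _ => (hasFDerivAt_sqMap y).hasFDerivWithinAt)
      ((sqMap_injOn d).mono Set.inter_subset_right),
    ← lintegral_const_mul' _ _ (by simp)]
  refine setLIntegral_congr_fun hm fun y hy => ?_
  have hp : 0 < ∏ i, y i := Finset.prod_pos fun i _ => hy.2 i
  have hs : Real.sqrt (∏ i, sqMap y i) = ∏ i, y i := by
    simp only [sqMap]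
    rw [Finset.prod_pow, Real.sqrt_sq hp.le]
  have h2 : (2 : ℝ≥0∞) ^ d = ENNReal.ofReal (2 ^ d) := by
    rw [ENNReal.ofReal_pow (by norm_num)]; simp
  simp only [det_sqDeriv, hs, Finset.prod_mul_distrib, Finset.prod_const, Finset.card_univ,
    Fintype.card_fin]
  rw [abs_of_pos (by positivity), h2, ← ENNReal.ofReal_mul (by positivity),
    ← ENNReal.ofReal_mul (by positivity)]
  congr 1
  field_simp

/-- The positive orthant carries at least a `2^{-d}` fraction of the mass of a ball centred in
it: up to a null set, the ball is covered by the `2^d` reflections of its positive part. -/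
lemma lintegral_ballB_le {d : ℕ} (w : (Fin d → ℝ) → ℝ) (hmeas : Measurable w)
    {x : Fin d → ℝ} (hx0 : ∀ i, 0 ≤ x i) (r : ℝ) :
    ∫⁻ y in ballB x r, ENNReal.ofReal (w (sqMap y)) ≤
      2 ^ d * ∫⁻ y in ballB x r ∩ posOrthant d, ENNReal.ofReal (w (sqMap y)) := by
  have hsq : Measurable (sqMap (d := d)) := by unfold sqMap; fun_prop
  have hf : Measurable fun y : Fin d → ℝ => ENNReal.ofReal (w (sqMap y)) :=
    (hmeas.comp hsq).ennreal_ofReal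
  have hm := (measurableSet_ballB x r).inter (measurableSet_posOrthant d)
  have hsub : (ballB x r : Set (Fin d → ℝ)) ≤ᵐ[volume]
      ⋃ σ : Fin d → ℤˣ, signMap σ ⁻¹' (ballB x r ∩ posOrthant d) := by
    filter_upwards [ae_coord_ne_zero d] with y hy0 hy
    obtain ⟨σ, hσ⟩ := exists_signMap_eq_abs y
    refine Set.mem_iUnion.2 ⟨σ, ?_⟩
    rw [Set.mem_preimage, hσ]
    exact ⟨abs_mem_ballB hx0 hy, fun i => abs_pos.2 (hy0 i)⟩
  calc ∫⁻ y in ballB x r, ENNReal.ofReal (w (sqMap y))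
      ≤ ∫⁻ y in ⋃ σ : Fin d → ℤˣ, signMap σ ⁻¹' (ballB x r ∩ posOrthant d),
          ENNReal.ofReal (w (sqMap y)) := lintegral_mono' (Measure.restrict_mono_ae hsub) le_rfl
    _ ≤ ∑' σ : Fin d → ℤˣ, ∫⁻ y in signMap σ ⁻¹' (ballB x r ∩ posOrthant d),
          ENNReal.ofReal (w (sqMap y)) := lintegral_iUnion_le _ _
    _ = ∑' _σ : Fin d → ℤˣ, ∫⁻ y in ballB x r ∩ posOrthant d,
          ENNReal.ofReal (w (sqMap y)) := by
        refine tsum_congr fun σ => ?_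
        rw [← (measurePreserving_signMap σ).setLIntegral_comp_preimage hm hf]
        simp only [sqMap_signMap]
    _ = _ := by
        rw [tsum_fintype, Finset.sum_const, nsmul_eq_mul]
        simp

lemma lintegral_ballB_abs {d : ℕ} (w : (Fin d → ℝ) → ℝ) (hmeas : Measurable w)
    (x : Fin d → ℝ) (r : ℝ) :
    ∫⁻ y in ballB x r, ENNReal.ofReal (w (sqMap y)) =
      ∫⁻ y in ballB (fun i => |x i|) r, ENNReal.ofReal (w (sqMap y)) := by
  have hsq : Measurable (sqMap (d := d)) := by unfold sqMap; fun_prop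
  have hf : Measurable fun y : Fin d → ℝ => ENNReal.ofReal (w (sqMap y)) :=
    (hmeas.comp hsq).ennreal_ofReal
  obtain ⟨σ, hσ⟩ := exists_signMap_eq_abs x
  rw [← hσ, ← (measurePreserving_signMap σ).setLIntegral_comp_preimage
    (measurableSet_ballB (signMap σ x) r) hf]
  simp only [sqMap_signMap]
  congr 2
  ext y
  exact (signMap_mem_ballB σ x y r).symm

/-- The two weights give comparable mass to corresponding balls. -/
lemma lintegral_comparison {d : ℕ} (w : (Fin d → ℝ) → ℝ) (hmeas : Measurable w)
    {x : Fin d → ℝ} (hx : x ∈ Bd d) (r : ℝ) :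
    ∫⁻ y in ballB x r, ENNReal.ofReal (w (sqMap y)) ≤
        ∫⁻ z in ballT (sqMap x) r, ENNReal.ofReal (w z / Real.sqrt (∏ i, z i)) ∧
      ∫⁻ z in ballT (sqMap x) r, ENNReal.ofReal (w z / Real.sqrt (∏ i, z i)) ≤
        2 ^ d * ∫⁻ y in ballB x r, ENNReal.ofReal (w (sqMap y)) := by
  have hsq : sqMap x = sqMap fun i => |x i| := by funext i; simp [sqMap]
  have hx' : (fun i => |x i|) ∈ Bd d := by rwa [← sqMap_mem_Td, ← hsq, sqMap_mem_Td]
  have h0 : ∀ i, 0 ≤ |x i| := fun i => abs_nonneg _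
  rw [lintegral_ballB_abs w hmeas x r, hsq, lintegral_ballT w hx' h0 r]
  refine ⟨lintegral_ballB_le w hmeas h0 r, ?_⟩
  gcongr
  exact Set.inter_subset_left

lemma integral_ballB_eq {d : ℕ} (w : (Fin d → ℝ) → ℝ) (hw : ∀ x ∈ Td d, 0 ≤ w x)
    (hmeas : Measurable w) (x : Fin d → ℝ) (r : ℝ) :
    ∫ y in ballB x r, w (fun i => y i ^ 2) =
      (∫⁻ y in ballB x r, ENNReal.ofReal (w (sqMap y))).toReal := by
  have hsq : Measurable (sqMap (d := d)) := by unfold sqMap; fun_prop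
  refine integral_eq_lintegral_of_nonneg_ae ?_ (hmeas.comp hsq).aestronglyMeasurable
  filter_upwards [ae_restrict_mem (measurableSet_ballB x r)] with y hy
  exact hw _ (sqMap_mem_Td.2 hy.1)

lemma integral_ballT_eq {d : ℕ} (w : (Fin d → ℝ) → ℝ) (hw : ∀ x ∈ Td d, 0 ≤ w x)
    (hmeas : Measurable w) (x : Fin d → ℝ) (r : ℝ) :
    ∫ z in ballT x r, w z / Real.sqrt (∏ i, z i) =
      (∫⁻ z in ballT x r, ENNReal.ofReal (w z / Real.sqrt (∏ i, z i))).toReal := by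
  refine integral_eq_lintegral_of_nonneg_ae ?_ (Measurable.aestronglyMeasurable (by fun_prop))
  filter_upwards [ae_restrict_mem (measurableSet_ballT x r)] with y hy
  exact div_nonneg (hw _ hy.1) (Real.sqrt_nonneg _)

/-- Transfer of a doubling inequality between comparable quantities.  The convention
`∞.toReal = 0` is harmless, since `a₂ = ∞` forces `b₂ = ∞`. -/
lemma doubling_transfer {a₁ a₂ b₁ b₂ : ℝ≥0∞} {K M : ℝ≥0∞} (hK : K ≠ ⊤) (hM : M ≠ ⊤)
    {L : ℝ} (hL : 0 < L) (ha : a₁ ≤ a₂) (h1 : a₁ ≤ K * b₁) (h2 : b₂ ≤ M * a₂)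
    (h2' : a₂ ≤ K * b₂) (h1' : b₁ ≤ M * a₁)
    (h : a₂.toReal ≤ L * a₁.toReal) :
    b₂.toReal ≤ (M.toReal * L * K.toReal) * b₁.toReal := by
  by_cases hb : b₂ = ⊤
  · rw [hb, ENNReal.toReal_top]
    positivity
  have ha2 : a₂ ≠ ⊤ := ne_top_of_le_ne_top (ENNReal.mul_ne_top hK hb) h2'
  have ha1 : a₁ ≠ ⊤ := ne_top_of_le_ne_top ha2 ha
  have hb1 : b₁ ≠ ⊤ := ne_top_of_le_ne_top (ENNReal.mul_ne_top hM ha1) h1'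
  have e1 := ENNReal.toReal_mono (ENNReal.mul_ne_top hK hb1) h1
  have e2 := ENNReal.toReal_mono (ENNReal.mul_ne_top hM ha2) h2
  rw [ENNReal.toReal_mul] at e1 e2
  calc b₂.toReal ≤ M.toReal * a₂.toReal := e2
    _ ≤ M.toReal * (L * (K.toReal * b₁.toReal)) := by
        gcongr
        exact h.trans (by gcongr)
    _ = _ := by ring

/-- `W(x) = 𝗐(x₁²,…,x_d²)` is a doubling weight on the unit ball `B^d`
if and only if `𝖶_Δ(x) = 𝗐(x)/√(x₁⋯x_d)` is a doubling weight on the simplex `Δ^d`. -/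
theorem stmt10 (d : ℕ) (hd : 1 ≤ d) (w : (Fin d → ℝ) → ℝ)
    (hw : ∀ x ∈ Td d, 0 ≤ w x) (hmeas : Measurable w) :
    IsDoublingBall d (fun x => w (fun i => x i ^ 2)) ↔
      IsDoublingSimplex d (fun x => w x / Real.sqrt (∏ i, x i)) := by
  have h2 : (2 : ℝ≥0∞) ^ d ≠ ⊤ := by simp
  constructor
  · rintro ⟨L, hL, h⟩
    refine ⟨((2 : ℝ≥0∞) ^ d).toReal * L * (1 : ℝ≥0∞).toReal, by simp [hL], fun x hx r hr => ?_⟩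
    have hxs : sqMap (fun i => Real.sqrt (x i)) = x := funext fun i => Real.sq_sqrt (hx.1 i)
    have hxB : (fun i => Real.sqrt (x i)) ∈ Bd d := by rwa [← sqMap_mem_Td, hxs]
    have hc := fun ρ => lintegral_comparison w hmeas hxB ρ
    have hh := h _ hxB r hr
    simp only [hxs] at hc
    rw [integral_ballB_eq w hw hmeas, integral_ballB_eq w hw hmeas] at hh
    rw [integral_ballT_eq w hw hmeas, integral_ballT_eq w hw hmeas]
    refine doubling_transfer ENNReal.one_ne_top h2 hL ?_ ?_ (hc _).2 ?_ (hc _).2 hh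
    · exact lintegral_mono_set fun y hy => ⟨hy.1, by linarith [hy.2]⟩
    · simpa using (hc r).1
    · simpa using (hc (2 * r)).1
  · rintro ⟨L, hL, h⟩
    refine ⟨(1 : ℝ≥0∞).toReal * L * ((2 : ℝ≥0∞) ^ d).toReal, by simp [hL], fun x hx r hr => ?_⟩
    have hc := fun ρ => lintegral_comparison w hmeas hx ρ
    have hh := h _ (sqMap_mem_Td.2 hx) r hr
    rw [integral_ballT_eq w hw hmeas, integral_ballT_eq w hw hmeas] at hh
    rw [integral_ballB_eq w hw hmeas, integral_ballB_eq w hw hmeas]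
    refine doubling_transfer h2 ENNReal.one_ne_top hL ?_ (hc _).2 ?_ (hc _).2 ?_ hh
    · exact lintegral_mono_set fun y hy => ⟨hy.1, by linarith [hy.2]⟩
    · simpa using (hc (2 * r)).1
    · simpa using (hc r).1


end
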